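/- (Energy bound under displacement.) For $m,n\in\mathbb N$ and $z,w\in\mathbb C$ let $$L_{m,n}(z,w)=\sum_{j=0}^{\min(m,n)}\frac{(-1)^j\,m!\,n!}{j!\,(m-j)!\,(n-j)!}\,z^{m-j}w^{n-j}$$ be the two-dimensional Laguerre polynomial. Let $s>1$, $\alpha\in\mathbb C$, and let $(\psi_n)_{n\in\mathbb N}$ be a sequence of complex numbers with $\sum_{n\ge0}s^n|\psi_n|^2<\infty$. Define the displacement matrix elements $$D_{mn}=\frac{(-1)^n e^{-|\alpha|^2/2}}{\sqrt{m!\,n!}}\,L_{m,n}(\alpha,\overline{\alpha}),\qquad m,n\in\mathbb N.$$ Then for every $m\in\mathbb N$ the series $\varphi_m:=\sum_{n\ge0}D_{mn}\psi_n$ converges absolutely, and for every real $t$ with $0\le t<s$ one has $$\sum_{m\ge0}t^m|\varphi_m|^2\;\le\;\frac{s}{s-t}\,\exp\!\left(-(s-1)|\alpha|^2\left(\frac1s-\frac{t(s-1)}{s(s-t)}\right)\right)\sum_{n\ge0}s^n|\psi_n|^2\;<\;\infty .$$ -/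

import Mathlib

/-- The two-dimensional Laguerre polynomial
`L_{m,n}(z,w) = Σ_{j=0}^{min(m,n)} (-1)^j m! n!/(j! (m-j)! (n-j)!) z^(m-j) w^(n-j)`. -/
noncomputable def laguerre2D (m n : ℕ) (z w : ℂ) : ℂ :=
  ∑ j ∈ Finset.range (min m n + 1),
    (-1 : ℂ) ^ j * (m.factorial : ℂ) * (n.factorial : ℂ) /
        ((j.factorial : ℂ) * ((m - j).factorial : ℂ) * ((n - j).factorial : ℂ)) *
      z ^ (m - j) * w ^ (n - j)

/-- The Fock matrix elements of the displacement operator `D̂(α)`: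
`⟨m|D̂(α)|n⟩ = (-1)^n e^(-|α|²/2) L_{m,n}(α, conj α)/√(m! n!)`. -/
noncomputable def dispElem (α : ℂ) (m n : ℕ) : ℂ :=
  (-1 : ℂ) ^ n * ((Real.exp (-‖α‖ ^ 2 / 2) : ℝ) : ℂ) *
      laguerre2D m n α (starRingEnd ℂ α) /
    ((Real.sqrt ((m.factorial : ℝ) * (n.factorial : ℝ)) : ℝ) : ℂ)

/-- The Fock amplitudes `φ_m = Σ_n ⟨m|D̂(α)|n⟩ ψ_n` of the displaced state `D̂(α)|ψ⟩`. -/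
noncomputable def dispAmplitude (α : ℂ) (ψ : ℕ → ℂ) (m : ℕ) : ℂ :=
  ∑' n : ℕ, dispElem α m n * ψ n

/-!
By the weighted Cauchy-Schwarz inequality it suffices to compute the squared Hilbert-Schmidt norm
`Σ_{m,n} t^m s^(-n) |D_{mn}|²`. Since raising an index of a Hermite polynomial obeys a two-term
recursion, `Σ_n u^n/n! H_{n,m} H'_{n,m}` is again an exponential times a Hermite polynomial, whose
coupling is `u` times the product of the two couplings. So the sum over `n` is, up to a factor
`1/m!`, a diagonal Hermite polynomial with coupling `s⁻¹`, and the remaining sum over `m`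
rearranges into an exponential series of negative binomial series in `t/s < 1`.
-/

open Finset NormedSpace
open scoped Nat ComplexConjugate

section HilbertSchmidt

variable {ι κ : Type*}

theorem summable_mul_and_sq_tsum_mul_le {f g : κ → ℝ} (hf : ∀ k, 0 ≤ f k)
    (hg : ∀ k, 0 ≤ g k) (hf2 : Summable fun k => f k ^ 2) (hg2 : Summable fun k => g k ^ 2) :
    (Summable fun k => f k * g k) ∧
      (∑' k, f k * g k) ^ 2 ≤ (∑' k, f k ^ 2) * ∑' k, g k ^ 2 := by
  obtain ⟨hfg, hle⟩ := Real.summable_and_inner_le_Lp_mul_Lq_tsum_of_nonneg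
    Real.HolderConjugate.two_two hf hg (by simpa using hf2) (by simpa using hg2)
  simp only [Real.rpow_two, ← Real.sqrt_eq_rpow] at hle
  have hf2_nonneg : 0 ≤ ∑' k, f k ^ 2 := tsum_nonneg fun k => sq_nonneg _
  have hg2_nonneg : 0 ≤ ∑' k, g k ^ 2 := tsum_nonneg fun k => sq_nonneg _
  have hfg_nonneg : 0 ≤ ∑' k, f k * g k := tsum_nonneg fun k => mul_nonneg (hf k) (hg k)
  rw [← Real.sqrt_mul hf2_nonneg] at hle
  exact ⟨hfg, (Real.le_sqrt hfg_nonneg (mul_nonneg hf2_nonneg hg2_nonneg)).1 hle⟩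

variable {R : Type*} [NonUnitalSeminormedRing R]

theorem summable_norm_mul_and_norm_sq_tsum_mul_le {w : κ → ℝ} (hw : ∀ k, 0 < w k) {a b : κ → R}
    (ha : Summable fun k => (w k)⁻¹ * ‖a k‖ ^ 2) (hb : Summable fun k => w k * ‖b k‖ ^ 2) :
    (Summable fun k => ‖a k * b k‖) ∧
      ‖∑' k, a k * b k‖ ^ 2 ≤ (∑' k, (w k)⁻¹ * ‖a k‖ ^ 2) * ∑' k, w k * ‖b k‖ ^ 2 := by
  have hsq_a (k : κ) : ((√(w k))⁻¹ * ‖a k‖) ^ 2 = (w k)⁻¹ * ‖a k‖ ^ 2 := by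
    rw [mul_pow, inv_pow, Real.sq_sqrt (hw k).le]
  have hsq_b (k : κ) : (√(w k) * ‖b k‖) ^ 2 = w k * ‖b k‖ ^ 2 := by
    rw [mul_pow, Real.sq_sqrt (hw k).le]
  have hmul (k : κ) : (√(w k))⁻¹ * ‖a k‖ * (√(w k) * ‖b k‖) = ‖a k‖ * ‖b k‖ := by
    have := Real.sqrt_pos.2 (hw k)
    field_simp
  obtain ⟨hsum, hle⟩ := summable_mul_and_sq_tsum_mul_le
    (f := fun k => (√(w k))⁻¹ * ‖a k‖) (g := fun k => √(w k) * ‖b k‖)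
    (fun k => by positivity) (fun k => by positivity)
    (by simpa only [hsq_a] using ha) (by simpa only [hsq_b] using hb)
  simp only [hsq_a, hsq_b, hmul] at hsum hle
  have hnorm : Summable fun k => ‖a k * b k‖ :=
    hsum.of_nonneg_of_le (fun k => norm_nonneg _) fun k => norm_mul_le _ _
  refine ⟨hnorm, le_trans ?_ hle⟩
  gcongr
  exact (norm_tsum_le_tsum_norm hnorm).trans (hnorm.tsum_le_tsum (fun k => norm_mul_le _ _) hsum)

theorem summable_mul_norm_sq_tsum_mul_and_tsum_le {v : ι → ℝ} {w : κ → ℝ} {A : ι → κ → R}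
    {b : κ → R} {T : ℝ} (hv : ∀ i, 0 ≤ v i) (hw : ∀ k, 0 < w k)
    (hA : ∀ i, Summable fun k => (w k)⁻¹ * ‖A i k‖ ^ 2)
    (hT : HasSum (fun i => v i * ∑' k, (w k)⁻¹ * ‖A i k‖ ^ 2) T)
    (hb : Summable fun k => w k * ‖b k‖ ^ 2) :
    (Summable fun i => v i * ‖∑' k, A i k * b k‖ ^ 2) ∧
      ∑' i, v i * ‖∑' k, A i k * b k‖ ^ 2 ≤ T * ∑' k, w k * ‖b k‖ ^ 2 := by
  have hbound := hT.mul_right (∑' k, w k * ‖b k‖ ^ 2)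
  have hle (i : ι) : v i * ‖∑' k, A i k * b k‖ ^ 2 ≤
      v i * (∑' k, (w k)⁻¹ * ‖A i k‖ ^ 2) * ∑' k, w k * ‖b k‖ ^ 2 := by
    rw [mul_assoc]
    exact mul_le_mul_of_nonneg_left
      (summable_norm_mul_and_norm_sq_tsum_mul_le hw (hA i) hb).2 (hv i)
  have hsum : Summable fun i => v i * ‖∑' k, A i k * b k‖ ^ 2 :=
    hbound.summable.of_nonneg_of_le (fun i => mul_nonneg (hv i) (sq_nonneg _)) hle
  exact ⟨hsum, hasSum_le hle hsum.hasSum hbound⟩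

end HilbertSchmidt

theorem hasSum_sum_antidiagonal {A M : Type*} [AddCommMonoid A] [HasAntidiagonal A]
    [AddCommMonoid M] [TopologicalSpace M] [ContinuousAdd M] [RegularSpace M] {f : A × A → M}
    {S : M} (hf : HasSum f S) : HasSum (fun n => ∑ p ∈ antidiagonal n, f p) S :=
  (HasAntidiagonal.sigmaAntidiagonalEquivProd.hasSum_iff.2 hf).sigma fun n =>
    (antidiagonal n).hasSum f

section Hermite

variable {R S : Type*} [CommSemiring R] [CommSemiring S]

/-- The Hermite polynomial in two variables with coupling `c`, that is
`m! n! [x^m y^n] exp (a x + b y + c x y)`. The coupling `-1` gives `laguerre2D`; other couplings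
appear because the family is closed under bilinear summation. -/
def hermite2D (c : R) (m n : ℕ) (a b : R) : R :=
  ∑ j ∈ range (min m n + 1),
    (m.choose j : R) * n.choose j * j ! * c ^ j * a ^ (m - j) * b ^ (n - j)

theorem hermite2D_comm (c : R) (m n : ℕ) (a b : R) :
    hermite2D c m n a b = hermite2D c n m b a := by
  unfold hermite2D
  rw [min_comm]
  exact sum_congr rfl fun j _ => by ring

theorem map_hermite2D (f : R →+* S) (c : R) (m n : ℕ) (a b : R) :
    f (hermite2D c m n a b) = hermite2D (f c) m n (f a) (f b) := by
  simp [hermite2D]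

theorem hermite2D_eq_sum_antidiagonal (c : R) (m n : ℕ) (a b : R) :
    hermite2D c m n a b = ∑ p ∈ antidiagonal m,
      (m.choose p.1 : R) * (n.descFactorial p.1 * c ^ p.1 * a ^ p.2 * b ^ (n - p.1)) := by
  rw [Nat.sum_antidiagonal_eq_sum_range_succ_mk, hermite2D]
  refine sum_congr_of_eq_on_inter (fun j hj hj' => ?_) (fun j hj hj' => ?_) fun j _ _ => ?_
  · simp only [mem_range] at hj hj'
    omega
  · simp only [mem_range] at hj hj'
    simp [Nat.descFactorial_of_lt (show n < j by omega)]
  · rw [Nat.descFactorial_eq_factorial_mul_choose]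
    push_cast
    ring

theorem hermite2D_zero_left (c : R) (n : ℕ) (a b : R) : hermite2D c 0 n a b = b ^ n := by
  simp [hermite2D]

theorem hermite2D_zero_right (c : R) (m : ℕ) (a b : R) : hermite2D c m 0 a b = a ^ m := by
  simp [hermite2D]

-- For `n = 0` the truncated index `n - 1` is harmless: its term has the factor `n`.
theorem hermite2D_succ_left (c : R) (m n : ℕ) (a b : R) :
    hermite2D c (m + 1) n a b =
      a * hermite2D c m n a b + c * n * hermite2D c m (n - 1) a b := by
  have hdesc (j : ℕ) :
      (n.descFactorial (j + 1) : R) = n * ((n - 1).descFactorial j : R) := by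
    cases n with
    | zero => simp
    | succ n => rw [Nat.succ_descFactorial_succ, Nat.cast_mul, Nat.add_sub_cancel]
  simp only [hermite2D_eq_sum_antidiagonal]
  rw [sum_antidiagonal_choose_succ_mul
    (fun i j => (n.descFactorial i : R) * c ^ i * a ^ j * b ^ (n - i)), mul_sum, mul_sum]
  congr 1 <;> refine sum_congr rfl fun p hp => ?_
  · ring
  · rw [Nat.choose_symm_of_eq_add (mem_antidiagonal.1 hp).symm, hdesc, Nat.sub_add_eq,
      Nat.sub_right_comm]
    ring

theorem hermite2D_succ_right (c : R) (m n : ℕ) (a b : R) :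
    hermite2D c m (n + 1) a b =
      b * hermite2D c m n a b + c * m * hermite2D c (m - 1) n a b := by
  rw [hermite2D_comm, hermite2D_succ_left, hermite2D_comm c n m, hermite2D_comm c n (m - 1)]

theorem hermite2D_self (c : R) (n : ℕ) (a b : R) :
    hermite2D c n n a b = ∑ p ∈ antidiagonal n,
      (n.choose p.1 : R) ^ 2 * p.2 ! * c ^ p.2 * (a * b) ^ p.1 := by
  rw [hermite2D_eq_sum_antidiagonal, ← Nat.sum_antidiagonal_swap]
  refine sum_congr rfl fun p hp => ?_
  have hp' := mem_antidiagonal.1 hp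
  rw [Prod.fst_swap, Prod.snd_swap, Nat.descFactorial_eq_factorial_mul_choose,
    ← Nat.choose_symm_of_eq_add hp'.symm, Nat.sub_eq_of_eq_add hp'.symm]
  push_cast
  ring

end Hermite

theorem laguerre2D_eq_hermite2D (m n : ℕ) (z w : ℂ) :
    laguerre2D m n z w = hermite2D (-1) m n z w := by
  refine sum_congr rfl fun j hj => ?_
  have hj' := mem_range.1 hj
  rw [Nat.cast_choose ℂ (by omega : j ≤ m), Nat.cast_choose ℂ (by omega : j ≤ n)]
  have := Nat.cast_ne_zero (R := ℂ).2 j.factorial_ne_zero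
  field_simp

section GeneratingFunctions

variable {𝕜 : Type*} [RCLike 𝕜]

theorem hasSum_pow_div_factorial_mul_natCast_mul {t S : 𝕜} {f : ℕ → 𝕜}
    (hf : HasSum (fun m => t ^ m / m ! * f (m + 1)) S) :
    HasSum (fun m => t ^ m / m ! * (m * f m)) (t * S) := by
  refine (hasSum_nat_add_iff' 1).1 ?_
  simp only [range_one, sum_singleton, Nat.cast_zero, zero_mul, mul_zero, sub_zero]
  refine (hf.mul_left t).congr_fun fun m => ?_
  have h : (m : 𝕜) + 1 ≠ 0 := m.cast_add_one_ne_zero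
  rw [Nat.factorial_succ]
  push_cast
  field_simp
  ring

theorem hasSum_hermite2D_succ_right_mul {t c z w S S' : 𝕜} {n : ℕ} {P : ℕ → 𝕜}
    (h : HasSum (fun m => t ^ m / m ! * (hermite2D c m n z w * P m)) S)
    (h' : HasSum (fun m => t ^ m / m ! * (hermite2D c m n z w * P (m + 1))) S') :
    HasSum (fun m => t ^ m / m ! * (hermite2D c m (n + 1) z w * P m)) (w * S + c * (t * S')) := by
  have hshift := hasSum_pow_div_factorial_mul_natCast_mul
    (f := fun m => hermite2D c (m - 1) n z w * P m) h'
  refine ((h.mul_left w).add (hshift.mul_left c)).congr_fun fun m => ?_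
  rw [hermite2D_succ_right]
  ring

theorem hasSum_hermite2D_mul_pow (t c z w x : 𝕜) (n : ℕ) :
    HasSum (fun m => t ^ m / m ! * (hermite2D c m n z w * x ^ m))
      (exp (t * z * x) * (w + c * t * x) ^ n) := by
  induction n with
  | zero =>
    simp only [hermite2D_zero_right, pow_zero, mul_one]
    exact (expSeries_div_hasSum_exp (t * z * x)).congr_fun fun m => by ring
  | succ n ih =>
    convert! hasSum_hermite2D_succ_right_mul ih ((ih.mul_left x).congr_fun fun m => by ring) using 1
    ring

theorem hasSum_hermite2D_mul_hermite2D (t c c' z w z' w' : 𝕜) (n k : ℕ) :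
    HasSum (fun m => t ^ m / m ! * (hermite2D c m n z w * hermite2D c' m k z' w'))
      (exp (t * z * z') * hermite2D (c * c' * t) n k (w + c * t * z') (w' + c' * t * z)) := by
  induction n generalizing k with
  | zero =>
    simp only [hermite2D_zero_left, hermite2D_zero_right]
    convert! (hasSum_hermite2D_mul_pow t c' z' w' z k).congr_fun fun m => ?_ using 1 <;> ring_nf
  | succ n ih =>
    have hshift := ((ih k).mul_left z').add ((ih (k - 1)).mul_left (c' * k))
    convert! hasSum_hermite2D_succ_right_mul (ih k) (hshift.congr_fun fun m => ?_) using 1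
    · rw [hermite2D_succ_left]
      ring
    · rw [hermite2D_succ_left]
      ring

theorem hasSum_choose_mul_pow_mul_pow_div_factorial {x : 𝕜} (hx : ‖x‖ < 1) (y : 𝕜) (k : ℕ) :
    HasSum (fun j : ℕ => ((j + k).choose k : 𝕜) * x ^ j * (y ^ k / k !))
      ((1 - x)⁻¹ * ((y / (1 - x)) ^ k / k !)) := by
  convert! (hasSum_choose_mul_geometric_of_norm_lt_one k hx).mul_right (y ^ k / k ! : 𝕜) using 1
  rw [div_pow, pow_succ]
  simp only [div_eq_mul_inv, mul_inv]
  ring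

theorem hasSum_prod_choose_mul_pow_mul_pow_div_factorial {x : 𝕜} (hx : ‖x‖ < 1) (y : 𝕜) :
    HasSum (fun p : ℕ × ℕ => ((p.2 + p.1).choose p.1 : 𝕜) * x ^ p.2 * (y ^ p.1 / p.1 !))
      ((1 - x)⁻¹ * exp (y / (1 - x))) := by
  have hrow := hasSum_choose_mul_pow_mul_pow_div_factorial (show ‖‖x‖‖ < 1 by rwa [norm_norm]) ‖y‖
  have hnorm : Summable fun p : ℕ × ℕ =>
      ((p.2 + p.1).choose p.1 : ℝ) * ‖x‖ ^ p.2 * (‖y‖ ^ p.1 / p.1 !) := by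
    refine (summable_prod_of_nonneg fun p => by positivity).2 ⟨fun k => (hrow k).summable, ?_⟩
    simp only [(hrow _).tsum_eq]
    exact (expSeries_div_summable (‖y‖ / (1 - ‖x‖))).mul_left _
  have hsum : Summable fun p : ℕ × ℕ =>
      ((p.2 + p.1).choose p.1 : 𝕜) * x ^ p.2 * (y ^ p.1 / p.1 !) :=
    Summable.of_norm (hnorm.congr fun p => by simp)
  have hexp := (expSeries_div_hasSum_exp (y / (1 - x))).mul_left (1 - x)⁻¹
  rw [← (hsum.hasSum.prod_fiberwise
    (hasSum_choose_mul_pow_mul_pow_div_factorial hx y)).unique hexp]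
  exact hsum.hasSum

theorem hasSum_hermite2D_self {u c : 𝕜} (huc : ‖u * c‖ < 1) (a b : 𝕜) :
    HasSum (fun n => u ^ n / n ! * hermite2D c n n a b)
      ((1 - u * c)⁻¹ * exp (u * (a * b) / (1 - u * c))) := by
  have h := hasSum_prod_choose_mul_pow_mul_pow_div_factorial huc (u * (a * b))
  refine (hasSum_sum_antidiagonal h).congr_fun fun n => ?_
  rw [hermite2D_self, mul_sum]
  refine sum_congr rfl fun p hp => ?_
  obtain rfl := mem_antidiagonal.1 hp
  rw [add_comm p.2, Nat.cast_add_choose]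
  have := Nat.cast_ne_zero (R := 𝕜).2 (p.1 + p.2).factorial_ne_zero
  have := Nat.cast_ne_zero (R := 𝕜).2 p.2.factorial_ne_zero
  field_simp
  ring

end GeneratingFunctions

theorem hermite2D_self_conj (c : ℝ) (n : ℕ) (z : ℂ) :
    hermite2D (c : ℂ) n n z (conj z) = (hermite2D c n n ‖z‖ ‖z‖ : ℝ) := by
  rw [← Complex.ofRealHom_eq_coe, ← Complex.ofRealHom_eq_coe, map_hermite2D, hermite2D_self,
    hermite2D_self, Complex.mul_conj', sq]
  rfl

theorem hasSum_norm_sq_hermite2D (t : ℝ) (c z w : ℂ) (n : ℕ) :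
    HasSum (fun m => t ^ m / m ! * ‖hermite2D c m n z w‖ ^ 2)
      (Real.exp (t * ‖z‖ ^ 2) *
        hermite2D (‖c‖ ^ 2 * t) n n ‖w + c * t * conj z‖ ‖w + c * t * conj z‖) := by
  refine Complex.hasSum_ofReal.1 ?_
  convert! (hasSum_hermite2D_mul_hermite2D (t : ℂ) c (conj c) z w (conj z) (conj w)
    n n).congr_fun fun m => ?_ using 1
  · rw [Complex.ofReal_mul, ← hermite2D_self_conj, mul_assoc _ z, Complex.mul_conj',
      Complex.mul_conj', ← Complex.exp_eq_exp_ℂ]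
    simp
  · rw [← map_hermite2D, Complex.mul_conj']
    push_cast
    rfl

theorem norm_sq_dispElem (α : ℂ) (m n : ℕ) :
    ‖dispElem α m n‖ ^ 2 =
      Real.exp (-‖α‖ ^ 2) * (‖hermite2D (-1) n m (conj α) α‖ ^ 2 / (m ! * n !)) := by
  have hexp : Real.exp (-‖α‖ ^ 2 / 2) ^ 2 = Real.exp (-‖α‖ ^ 2) := by
    rw [← Real.exp_nat_mul]
    congr 1
    push_cast
    ring
  rw [dispElem, laguerre2D_eq_hermite2D, hermite2D_comm, norm_div, norm_mul, norm_mul, norm_pow,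
    norm_neg, norm_one, one_pow, one_mul, Complex.norm_of_nonneg (Real.exp_pos _).le,
    Complex.norm_of_nonneg (Real.sqrt_nonneg _), div_pow, mul_pow, Real.sq_sqrt (by positivity),
    hexp, mul_div_assoc]

theorem hasSum_pow_mul_norm_sq_dispElem (u : ℝ) (α : ℂ) (m : ℕ) :
    HasSum (fun n => u ^ n * ‖dispElem α m n‖ ^ 2)
      (Real.exp (-((1 - u) * ‖α‖ ^ 2)) *
        (hermite2D u m m (|1 - u| * ‖α‖) (|1 - u| * ‖α‖) / m !)) := by
  have hnorm : ‖α + -1 * u * conj (conj α)‖ = |1 - u| * ‖α‖ := by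
    rw [Complex.conj_conj, ← Real.norm_eq_abs, ← Complex.norm_real, ← norm_mul]
    congr 1
    push_cast
    ring
  have h := (hasSum_norm_sq_hermite2D u (-1) (conj α) α m).mul_left (Real.exp (-‖α‖ ^ 2) / m !)
  rw [hnorm, Complex.norm_conj, norm_neg, norm_one, one_pow, one_mul] at h
  convert! h.congr_fun fun n => ?_ using 1
  · rw [show -((1 - u) * ‖α‖ ^ 2) = -‖α‖ ^ 2 + u * ‖α‖ ^ 2 by ring, Real.exp_add]
    ring
  · rw [norm_sq_dispElem]
    ring

theorem hasSum_pow_mul_tsum_inv_pow_mul_norm_sq_dispElem {s t : ℝ} (hts : |t| < s) (α : ℂ) :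
    HasSum (fun m => t ^ m * ∑' n, (s ^ n)⁻¹ * ‖dispElem α m n‖ ^ 2)
      (s / (s - t) *
        Real.exp (-((s - 1) * ‖α‖ ^ 2 * (1 / s - t * (s - 1) / (s * (s - t)))))) := by
  have hs : 0 < s := (abs_nonneg t).trans_lt hts
  have hst : s - t ≠ 0 := sub_ne_zero.2 ((le_abs_self t).trans_lt hts).ne'
  have hratio : 1 - t * s⁻¹ = (s - t) / s := by field_simp
  have hlt : ‖t * s⁻¹‖ < 1 := by
    rwa [← div_eq_mul_inv, Real.norm_eq_abs, abs_div, abs_of_pos hs, div_lt_one hs]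
  convert! ((hasSum_hermite2D_self hlt (|1 - s⁻¹| * ‖α‖) (|1 - s⁻¹| * ‖α‖)).mul_left
    (Real.exp (-((1 - s⁻¹) * ‖α‖ ^ 2)))).congr_fun fun m => ?_ using 1
  · rw [mul_left_comm, ← Real.exp_eq_exp_ℝ, ← Real.exp_add, mul_mul_mul_comm,
      abs_mul_abs_self, hratio, inv_div]
    congr 2
    field_simp
    ring
  · simp only [← inv_pow]
    rw [(hasSum_pow_mul_norm_sq_dispElem s⁻¹ α m).tsum_eq]
    ring

theorem energy_bound_displacement_general (s : ℝ) (hs : 0 < s) (α : ℂ) (ψ : ℕ → ℂ)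
    (hE : Summable fun n : ℕ => s ^ n * ‖ψ n‖ ^ 2) :
    (∀ m : ℕ, Summable fun n : ℕ => ‖dispElem α m n * ψ n‖) ∧
    (∀ t : ℝ, 0 ≤ t → t < s →
      (Summable fun m : ℕ => t ^ m * ‖dispAmplitude α ψ m‖ ^ 2) ∧
      ∑' m : ℕ, t ^ m * ‖dispAmplitude α ψ m‖ ^ 2 ≤
        (s / (s - t)) *
          Real.exp (-((s - 1) * ‖α‖ ^ 2 * (1 / s - t * (s - 1) / (s * (s - t))))) *
          ∑' n : ℕ, s ^ n * ‖ψ n‖ ^ 2) := by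
  have hweight (n : ℕ) : 0 < s ^ n := pow_pos hs n
  have hrow (m : ℕ) : Summable fun n => (s ^ n)⁻¹ * ‖dispElem α m n‖ ^ 2 := by
    simpa only [inv_pow] using (hasSum_pow_mul_norm_sq_dispElem s⁻¹ α m).summable
  refine ⟨fun m => (summable_norm_mul_and_norm_sq_tsum_mul_le hweight (hrow m) hE).1,
    fun t ht hts => ?_⟩
  exact summable_mul_norm_sq_tsum_mul_and_tsum_le (fun m => pow_nonneg ht m) hweight hrow
    (hasSum_pow_mul_tsum_inv_pow_mul_norm_sq_dispElem (by rwa [abs_of_nonneg ht]) α) hE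

/-- **Energy bound under displacement.** If `Σ s^n |ψ_n|² < ∞` for some `s > 1`, then
for every `m` the series of the displaced amplitude `φ_m = Σ_n ⟨m|D̂(α)|n⟩ ψ_n` converges
absolutely, and for every `0 ≤ t < s`,
`Σ_m t^m |φ_m|² ≤ (s/(s-t)) exp(-(s-1)|α|²(1/s - t(s-1)/(s(s-t)))) Σ_n s^n |ψ_n|² < ∞`. -/
theorem energy_bound_displacement (s : ℝ) (hs : 1 < s) (α : ℂ) (ψ : ℕ → ℂ)
    (hE : Summable fun n : ℕ => s ^ n * ‖ψ n‖ ^ 2) :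
    (∀ m : ℕ, Summable fun n : ℕ => ‖dispElem α m n * ψ n‖) ∧
    (∀ t : ℝ, 0 ≤ t → t < s →
      (Summable fun m : ℕ => t ^ m * ‖dispAmplitude α ψ m‖ ^ 2) ∧
      ∑' m : ℕ, t ^ m * ‖dispAmplitude α ψ m‖ ^ 2 ≤
        (s / (s - t)) *
          Real.exp (-((s - 1) * ‖α‖ ^ 2 * (1 / s - t * (s - 1) / (s * (s - t))))) *
          ∑' n : ℕ, s ^ n * ‖ψ n‖ ^ 2) :=
  energy_bound_displacement_general s (zero_lt_one.trans hs) α ψ hE
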